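/- arXiv:1505.06936 — 5 statements merged into one kernel-verified Lean document; each statement's English description precedes it below -/
import Mathlib

section
/- Let F be a Finsler function on ℝⁿ. Then (ℝⁿ, F) is projectively flat in a parameter-preserving manner in the standard coordinates if and only if (ℝⁿ, F) is a Minkowski space, i.e. F is independent of its first argument: F(x, y) = F(x', y) for all x, x', y ∈ ℝⁿ. -/
open scoped BigOperators Topology
noncomputable section

abbrev E (n : ℕ) := Fin n → ℝ

/-- Partial derivative with respect to the base coordinate `x^i`. -/
def pdx {n : ℕ} (i : Fin n) (f : E n × E n → ℝ) (p : E n × E n) : ℝ :=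
  fderiv ℝ f p (Pi.single i 1, 0)

/-- Partial derivative with respect to the fibre coordinate `y^i`. -/
def pdy {n : ℕ} (i : Fin n) (f : E n × E n → ℝ) (p : E n × E n) : ℝ :=
  fderiv ℝ f p (0, Pi.single i 1)

/-- A Finsler function on `ℝⁿ`. -/
structure IsFinsler {n : ℕ} (F : E n × E n → ℝ) : Prop where
  smooth : ContDiffOn ℝ (⊤ : ℕ∞) F {p : E n × E n | p.2 ≠ 0}
  homog : ∀ (x y : E n) (c : ℝ), 0 < c → F (x, c • y) = c * F (x, y)
  pos : ∀ (x y : E n), y ≠ 0 → 0 < F (x, y)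
  posDef : ∀ (x y : E n), y ≠ 0 →
    (Matrix.of fun i j : Fin n =>
      (1 / 2) * pdy i (pdy j (fun p => F p ^ 2)) (x, y)).PosDef

/-- A geodesic of `(ℝⁿ, F)`: a `C²` curve on a nontrivial open interval, with nowhere
vanishing velocity, positive constant speed, satisfying the Euler–Lagrange equations. -/
structure IsGeodesic {n : ℕ} (F : E n × E n → ℝ) (γ : ℝ → E n) (t₁ t₂ : ℝ) : Prop where
  lt : t₁ < t₂
  smooth : ContDiffOn ℝ 2 γ (Set.Ioo t₁ t₂)
  vel : ∀ t ∈ Set.Ioo t₁ t₂, deriv γ t ≠ 0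
  constSpeed : ∃ c : ℝ, 0 < c ∧ ∀ t ∈ Set.Ioo t₁ t₂, F (γ t, deriv γ t) = c
  eulerLagrange : ∀ (i : Fin n), ∀ t ∈ Set.Ioo t₁ t₂,
    deriv (fun s => pdy i F (γ s, deriv γ s)) t = pdx i F (γ t, deriv γ t)

/-- The Hamel equations in the standard coordinates. -/
def SatisfiesHamel {n : ℕ} (F : E n × E n → ℝ) : Prop :=
  ∀ (x y : E n), y ≠ 0 → ∀ i : Fin n,
    ∑ k, pdx k (pdy i F) (x, y) * y k = ∑ k, pdx i (pdy k F) (x, y) * y k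

/-- `(ℝⁿ, F)` is rectilinear in the standard coordinates. -/
def Rectilinear {n : ℕ} (F : E n × E n → ℝ) : Prop :=
  ∀ (γ : ℝ → E n) (t₁ t₂ : ℝ), IsGeodesic F γ t₁ t₂ →
    ∃ (f : ℝ → ℝ) (a b : E n), a ≠ 0 ∧
      ContDiffOn ℝ 2 f (Set.Ioo t₁ t₂) ∧
      (∀ t ∈ Set.Ioo t₁ t₂, 0 < deriv f t) ∧
      ∀ t ∈ Set.Ioo t₁ t₂, γ t = f t • a + b

/-- `(ℝⁿ, F)` is projectively flat in a parameter-preserving manner in the standard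
coordinates: every geodesic has the form `t ↦ t • a + b`. -/
def ParamFlat {n : ℕ} (F : E n × E n → ℝ) : Prop :=
  ∀ (γ : ℝ → E n) (t₁ t₂ : ℝ), IsGeodesic F γ t₁ t₂ →
    ∃ a b : E n, a ≠ 0 ∧ ∀ t ∈ Set.Ioo t₁ t₂, γ t = t • a + b

/-!
Both conditions say that the accelerations of `F`, the second derivatives of its geodesics as
functions of position and velocity, vanish identically. A curve is a geodesic of `F` if and only if
it solves the Euler–Lagrange equation of the energy `F ^ 2`: along curves of constant speed the
equations of `F` and `F ^ 2` agree, and solutions for `F ^ 2` have constant speed by Euler's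
identity. As the fibre Hessian of `F ^ 2` is invertible, that equation can be solved for the
acceleration, and geodesics with any initial velocity exist; hence all geodesics are affine if and
only if the acceleration vanishes.

If the acceleration vanishes, conservation of `F ^ 2` along straight lines reads
`∑ k, y^k ∂(F ^ 2)/∂x^k = 0`. Differentiating this with respect to `y^i`, and comparing with the
Euler–Lagrange equation `∑ k, y^k ∂²(F ^ 2)/∂x^k∂y^i = ∂(F ^ 2)/∂x^i`, gives
`2 ∂(F ^ 2)/∂x^i = 0`.
-/

section Lagrangian

variable {V : Type*} [NormedAddCommGroup V] [NormedSpace ℝ V] {L : V × V → ℝ} {p : V × V} {a : V}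

/-- The partial derivative of a Lagrangian `L(x, y)` with respect to the position `x`. -/
def baseDeriv (L : V × V → ℝ) (p : V × V) : V →L[ℝ] ℝ :=
  (fderiv ℝ L p).comp (ContinuousLinearMap.inl ℝ V V)

/-- The partial derivative of a Lagrangian `L(x, y)` with respect to the velocity `y`, i.e. the
conjugate momentum. -/
def fibreDeriv (L : V × V → ℝ) (p : V × V) : V →L[ℝ] ℝ :=
  (fderiv ℝ L p).comp (ContinuousLinearMap.inr ℝ V V)

/-- The second derivative of a Lagrangian `L(x, y)` with respect to the velocity `y`, as a map from
`V` to its dual. For `L = F ^ 2` this is twice the fundamental tensor of `F`. -/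
def fibreHessian (L : V × V → ℝ) (p : V × V) : V →L[ℝ] V →L[ℝ] ℝ :=
  (fderiv ℝ (fibreDeriv L) p).comp (ContinuousLinearMap.inr ℝ V V)

/-- The Euler–Lagrange equation `d/dt (∂L/∂y) = ∂L/∂x` at a single instant, at which the position
and velocity are given by `p` and the acceleration is `a`. -/
def SolvesEulerLagrange (L : V × V → ℝ) (p : V × V) (a : V) : Prop :=
  fderiv ℝ (fibreDeriv L) p (p.2, a) = baseDeriv L p

/-- The acceleration that the Euler–Lagrange equation of `L` prescribes at position and velocity
`p`. It is meaningful only where the fibre Hessian of `L` is invertible. -/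
def lagrangianAccel (L : V × V → ℝ) (p : V × V) : V :=
  (fibreHessian L p).inverse (baseDeriv L p - fderiv ℝ (fibreDeriv L) p (p.2, 0))

theorem solvesEulerLagrange_iff_eq_lagrangianAccel (h : (fibreHessian L p).IsInvertible) :
    SolvesEulerLagrange L p a ↔ a = lagrangianAccel L p := by
  have split : fderiv ℝ (fibreDeriv L) p (p.2, a) =
      fderiv ℝ (fibreDeriv L) p (p.2, 0) + fibreHessian L p a := by
    simp [fibreHessian, ← map_add]
  rw [SolvesEulerLagrange, split, lagrangianAccel, eq_comm (a := a), h.inverse_apply_eq,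
    sub_eq_iff_eq_add', eq_comm]

theorem fderiv_apply_eq_baseDeriv_add_fibreDeriv (L : V × V → ℝ) (p : V × V) (u v : V) :
    fderiv ℝ L p (u, v) = baseDeriv L p u + fibreDeriv L p v := by
  simp [baseDeriv, fibreDeriv, ← map_add]

theorem fderiv_fibreDeriv_apply (h : DifferentiableAt ℝ (fderiv ℝ L) p) (w : V × V) (v : V) :
    fderiv ℝ (fibreDeriv L) p w v = fderiv ℝ (fderiv ℝ L) p w (0, v) := by
  have := h.hasFDerivAt.clm_comp (hasFDerivAt_const (ContinuousLinearMap.inr ℝ V V) p)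
  change fderiv ℝ (fun q => (fderiv ℝ L q).comp (ContinuousLinearMap.inr ℝ V V)) p w v = _
  simp [this.fderiv]

theorem contDiffAt_fibreDeriv {m n : WithTop ℕ∞} (hL : ContDiffAt ℝ n L p) (hmn : m + 1 ≤ n) :
    ContDiffAt ℝ m (fibreDeriv L) p :=
  (hL.fderiv_right hmn).clm_comp contDiffAt_const

theorem differentiableAt_fibreDeriv (hL : ContDiffAt ℝ 2 L p) :
    DifferentiableAt ℝ (fibreDeriv L) p :=
  (contDiffAt_fibreDeriv (m := 1) hL (by norm_num)).differentiableAt one_ne_zero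

theorem contDiffAt_lagrangianAccel [CompleteSpace V] {m n : WithTop ℕ∞} (hL : ContDiffAt ℝ n L p)
    (hmn : m + 2 ≤ n) (h : (fibreHessian L p).IsInvertible) :
    ContDiffAt ℝ m (lagrangianAccel L) p := by
  have hmn' : m + 1 + 1 ≤ n := by rwa [add_assoc, one_add_one_eq_two]
  have smooth_base : ContDiffAt ℝ m (baseDeriv L) p :=
    (hL.fderiv_right (le_self_add.trans hmn')).clm_comp contDiffAt_const
  have smooth_fderiv_fibre : ContDiffAt ℝ m (fderiv ℝ (fibreDeriv L)) p :=
    (contDiffAt_fibreDeriv hL hmn').fderiv_right le_rfl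
  have smooth_inverse : ContDiffAt ℝ m (fun q => (fibreHessian L q).inverse) p :=
    h.contDiffAt_map_inverse.comp p (smooth_fderiv_fibre.clm_comp contDiffAt_const)
  exact smooth_inverse.clm_apply
    (smooth_base.sub (smooth_fderiv_fibre.clm_apply (contDiffAt_snd.prodMk contDiffAt_const)))

theorem fibreDeriv_apply_snd_of_homogeneous {k : ℕ} (hL : DifferentiableAt ℝ L p)
    (hom : ∀ (x y : V) (c : ℝ), 0 < c → L (x, c • y) = c ^ k * L (x, y)) :
    fibreDeriv L p p.2 = k * L p := by
  obtain ⟨x, y⟩ := p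
  have ray : HasDerivAt (fun c : ℝ => (x, c • y)) (0, y) 1 := by
    simpa using (hasDerivAt_const (1 : ℝ) x).prodMk ((hasDerivAt_id (1 : ℝ)).smul_const y)
  have along_ray : HasDerivAt (fun c : ℝ => L (x, c • y)) (fibreDeriv L (x, y) y) 1 :=
    HasFDerivAt.comp_hasDerivAt (1 : ℝ) (by simpa using hL.hasFDerivAt) ray
  have power : HasDerivAt (fun c : ℝ => c ^ k * L (x, y)) (k * L (x, y)) 1 := by
    simpa using (hasDerivAt_pow k (1 : ℝ)).mul_const (L (x, y))
  refine along_ray.unique (power.congr_of_eventuallyEq ?_)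
  filter_upwards [lt_mem_nhds zero_lt_one] with c hc using hom x y c hc

theorem SolvesEulerLagrange.fderiv_apply_eq_zero (hL : ContDiffAt ℝ 2 L p)
    (euler : ∀ᶠ q in 𝓝 p, fibreDeriv L q q.2 = 2 * L q) (ha : SolvesEulerLagrange L p a) :
    fderiv ℝ L p (p.2, a) = 0 := by
  have d_euler : fderiv ℝ (fibreDeriv L) p (p.2, a) p.2 + fibreDeriv L p a =
      2 * fderiv ℝ L p (p.2, a) := by
    have d_left := (differentiableAt_fibreDeriv hL).hasFDerivAt.clm_apply
      (hasFDerivAt_snd (p := p))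
    have d_right := (hL.differentiableAt two_ne_zero).hasFDerivAt.const_mul 2
    have := DFunLike.congr_fun (d_left.unique (d_right.congr_of_eventuallyEq euler)) (p.2, a)
    simpa [add_comm] using this
  rw [ha, ← fderiv_apply_eq_baseDeriv_add_fibreDeriv] at d_euler
  linarith

theorem baseDeriv_eq_zero_of_solvesEulerLagrange_zero (hL : ContDiffAt ℝ 2 L p)
    (conserved : ∀ᶠ q in 𝓝 p, fderiv ℝ L q (q.2, 0) = 0) (h : SolvesEulerLagrange L p 0) :
    baseDeriv L p = 0 := by
  have hdL : DifferentiableAt ℝ (fderiv ℝ L) p :=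
    (hL.fderiv_right (m := 1) (by norm_num)).differentiableAt one_ne_zero
  have symm : IsSymmSndFDerivAt ℝ L p := hL.isSymmSndFDerivAt (by simp)
  ext v
  have d_conserved : fderiv ℝ (fderiv ℝ L) p (0, v) (p.2, 0) + baseDeriv L p v = 0 := by
    have d_left := hdL.hasFDerivAt.clm_apply
      (hasFDerivAt_snd.prodMk (hasFDerivAt_const (0 : V) p))
    have d_right := (hasFDerivAt_const (𝕜 := ℝ) (0 : ℝ) p).congr_of_eventuallyEq conserved
    have := DFunLike.congr_fun (d_left.unique d_right) (0, v)
    simpa [baseDeriv, add_comm] using this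
  have equation : fderiv ℝ (fderiv ℝ L) p (p.2, 0) (0, v) = baseDeriv L p v := by
    rw [← fderiv_fibreDeriv_apply hdL, h]
  rw [symm, equation] at d_conserved
  simpa using d_conserved

theorem apply_eq_of_forall_baseDeriv_eq_zero {y : V} (hL : ∀ x, DifferentiableAt ℝ L (x, y))
    (h : ∀ x, baseDeriv L (x, y) = 0) (x x' : V) : L (x, y) = L (x', y) := by
  have hd (z : V) : HasFDerivAt (fun z => L (z, y)) (baseDeriv L (z, y)) z :=
    (hL z).hasFDerivAt.comp z (hasFDerivAt_prodMk_left z y)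
  exact is_const_of_fderiv_eq_zero (𝕜 := ℝ) (f := fun z => L (z, y))
    (fun z => (hd z).differentiableAt) (fun z => (hd z).fderiv.trans (h z)) x x'

theorem solvesEulerLagrange_sq_iff_of_fderiv_eq_zero (hL : ContDiffAt ℝ 2 L p) (hp : L p ≠ 0)
    (h : fderiv ℝ L p (p.2, a) = 0) :
    SolvesEulerLagrange (L ^ 2) p a ↔ SolvesEulerLagrange L p a := by
  have hL' : ∀ᶠ q in 𝓝 p, DifferentiableAt ℝ L q :=
    (hL.eventually (by simp)).mono fun q hq => hq.differentiableAt two_ne_zero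
  have base : baseDeriv (L ^ 2) p = (2 * L p) • baseDeriv L p := by
    simp [baseDeriv, fderiv_pow 2 hL'.self_of_nhds]
  have fibre : fibreDeriv (L ^ 2) =ᶠ[𝓝 p] fun q => (2 * L q) • fibreDeriv L q := by
    filter_upwards [hL'] with q hq
    simp [fibreDeriv, fderiv_pow 2 hq]
  have d_fibre : fderiv ℝ (fibreDeriv (L ^ 2)) p (p.2, a) =
      (2 * L p) • fderiv ℝ (fibreDeriv L) p (p.2, a) := by
    have := (hL'.self_of_nhds.hasFDerivAt.const_mul 2).smul
      (differentiableAt_fibreDeriv hL).hasFDerivAt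
    rw [(this.congr_of_eventuallyEq fibre).fderiv]
    simp [h]
  rw [SolvesEulerLagrange, SolvesEulerLagrange, base, d_fibre,
    smul_right_inj (mul_ne_zero two_ne_zero hp)]

theorem isInvertible_of_forall_apply_self_pos [FiniteDimensional ℝ V] {B : V →L[ℝ] V →L[ℝ] ℝ}
    (hB : ∀ v, v ≠ 0 → 0 < B v v) : B.IsInvertible := by
  have injective : Function.Injective B := by
    refine (injective_iff_map_eq_zero B).2 fun v hv => ?_
    by_contra hne
    simpa [hv] using hB v hne
  have finrank_dual : Module.finrank ℝ V = Module.finrank ℝ (V →L[ℝ] ℝ) := by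
    rw [← LinearMap.toContinuousLinearMap.finrank_eq]
    exact Subspace.dual_finrank_eq.symm
  exact ⟨(LinearMap.linearEquivOfInjective B.toLinearMap injective
    finrank_dual).toContinuousLinearEquiv, rfl⟩

end Lagrangian

section FstInvariant

variable {V W : Type*} [NormedAddCommGroup V] [NormedSpace ℝ V] [NormedAddCommGroup W]
  [NormedSpace ℝ W] {f : V × V → W}

theorem fderiv_eq_of_forall_fst (h : ∀ x x' y, f (x, y) = f (x', y)) (x x' y : V) :
    fderiv ℝ f (x, y) = fderiv ℝ f (x', y) := by
  have invariant : (fun q => f (q + (x' - x, 0))) = f :=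
    funext fun q => (h _ q.1 (q + (x' - x, 0)).2).trans (by simp)
  simpa [invariant] using fderiv_comp_add_right (𝕜 := ℝ) (f := f) (x := (x, y)) (x' - x, 0)

theorem fderiv_apply_zero_of_forall_fst (h : ∀ x x' y, f (x, y) = f (x', y)) (p : V × V) (v : V) :
    fderiv ℝ f p (v, 0) = 0 := by
  by_cases hf : DifferentiableAt ℝ f p
  · have partial_deriv : HasFDerivAt (fun x => f (x, p.2))
        ((fderiv ℝ f p).comp (ContinuousLinearMap.inl ℝ V V)) p.1 :=
      hf.hasFDerivAt.comp p.1 (hasFDerivAt_prodMk_left p.1 p.2)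
    have const : HasFDerivAt (fun x => f (x, p.2)) (0 : V →L[ℝ] W) p.1 := by
      simpa only [h _ p.1 p.2] using hasFDerivAt_const (f (p.1, p.2)) p.1
    exact DFunLike.congr_fun (partial_deriv.unique const) v
  · simp [fderiv_zero_of_not_differentiableAt hf]

theorem solvesEulerLagrange_zero_of_forall_fst {L : V × V → ℝ}
    (h : ∀ x x' y, L (x, y) = L (x', y)) (p : V × V) : SolvesEulerLagrange L p 0 := by
  have base : baseDeriv L p = 0 :=
    ContinuousLinearMap.ext fun v => fderiv_apply_zero_of_forall_fst h p v
  have fibre : ∀ x x' y, fibreDeriv L (x, y) = fibreDeriv L (x', y) := fun x x' y => by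
    rw [fibreDeriv, fibreDeriv, fderiv_eq_of_forall_fst h x x' y]
  rw [SolvesEulerLagrange, base, fderiv_apply_zero_of_forall_fst fibre]

end FstInvariant

section SecondOrderODE

variable {V : Type*} [NormedAddCommGroup V] [NormedSpace ℝ V]

theorem exists_hasDerivAt_secondOrder [CompleteSpace V] {A : V × V → V} {p : V × V}
    {U : Set (V × V)} (hA : ContDiffAt ℝ 1 A p) (hU : U ∈ 𝓝 p) :
    ∃ (γ v : ℝ → V) (ε : ℝ), 0 < ε ∧ (γ 0, v 0) = p ∧ ∀ t ∈ Set.Ioo (-ε) ε,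
      (γ t, v t) ∈ U ∧ HasDerivAt γ (v t) t ∧ HasDerivAt v (A (γ t, v t)) t := by
  have hfield : ContDiffAt ℝ 1 (fun q : V × V => (q.2, A q)) p := contDiffAt_snd.prodMk hA
  obtain ⟨α, hα0, δ, hδ, hα⟩ :=
    hfield.exists_forall_mem_closedBall_exists_eq_forall_mem_Ioo_hasDerivAt₀ 0
  have stays : ∀ᶠ t in 𝓝 (0 : ℝ), α t ∈ U :=
    (hα 0 (by simpa using hδ)).continuousAt (by rwa [hα0])
  obtain ⟨η, hη, hαU⟩ := Metric.eventually_nhds_iff.1 stays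
  refine ⟨fun t => (α t).1, fun t => (α t).2, min δ η, lt_min hδ hη, hα0, fun t ht => ?_⟩
  obtain ⟨htδ, htη⟩ := lt_min_iff.1 (abs_lt.2 ht)
  have solves : HasDerivAt α ((α t).2, A (α t)) t := hα t (by simpa using abs_lt.1 htδ)
  exact ⟨hαU (by simpa using htη), solves.fst, solves.snd⟩

theorem contDiffOn_two_of_hasDerivAt {γ v a : ℝ → V} {s : Set ℝ} (hs : IsOpen s)
    (hγ : ∀ t ∈ s, HasDerivAt γ (v t) t) (hv : ∀ t ∈ s, HasDerivAt v (a t) t)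
    (ha : ContinuousOn a s) : ContDiffOn ℝ 2 γ s := by
  have hv_one : ContDiffOn ℝ 1 v s := by
    rw [← zero_add (1 : WithTop ℕ∞), contDiffOn_succ_iff_deriv_of_isOpen hs, contDiffOn_zero]
    exact ⟨fun t ht => (hv t ht).differentiableAt.differentiableWithinAt, by simp,
      ha.congr fun t ht => (hv t ht).deriv⟩
  rw [← one_add_one_eq_two, contDiffOn_succ_iff_deriv_of_isOpen hs]
  exact ⟨fun t ht => (hγ t ht).differentiableAt.differentiableWithinAt, by simp,
    hv_one.congr fun t ht => (hγ t ht).deriv⟩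

theorem hasDerivAt_deriv_of_contDiffOn_two {γ : ℝ → V} {s : Set ℝ} (hs : IsOpen s)
    (hγ : ContDiffOn ℝ 2 γ s) {t : ℝ} (ht : t ∈ s) :
    HasDerivAt γ (deriv γ t) t ∧ HasDerivAt (deriv γ) (deriv (deriv γ) t) t := by
  rw [← one_add_one_eq_two, contDiffOn_succ_iff_deriv_of_isOpen hs] at hγ
  exact ⟨(hγ.1.differentiableAt (hs.mem_nhds ht)).hasDerivAt,
    ((hγ.2.2.differentiableOn one_ne_zero).differentiableAt (hs.mem_nhds ht)).hasDerivAt⟩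

theorem exists_eq_smul_add_of_hasDerivAt_deriv_zero {γ : ℝ → V} {s : Set ℝ} (hs : IsOpen s)
    (hs' : IsPreconnected s) (hγ : ∀ t ∈ s, HasDerivAt γ (deriv γ t) t)
    (hγ' : ∀ t ∈ s, HasDerivAt (deriv γ) 0 t) :
    ∃ a b : V, ∀ t ∈ s, deriv γ t = a ∧ γ t = t • a + b := by
  obtain ⟨a, ha⟩ := hs.exists_is_const_of_deriv_eq_zero hs'
    (fun t ht => (hγ' t ht).differentiableAt.differentiableWithinAt) fun t ht => (hγ' t ht).deriv
  have line : ∀ t, HasDerivAt (fun s : ℝ => s • a) a t := fun t => by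
    simpa using (hasDerivAt_id t).smul_const a
  obtain ⟨b, hb⟩ := hs.exists_eq_add_of_deriv_eq hs'
    (fun t ht => (hγ t ht).differentiableAt.differentiableWithinAt)
    (fun t _ => (line t).differentiableAt.differentiableWithinAt)
    fun t ht => by rw [ha t ht, (line t).deriv]
  exact ⟨a, b, fun t ht => ⟨ha t ht, hb ht⟩⟩

end SecondOrderODE

theorem isOpen_setOf_snd_ne_zero {X Y : Type*} [TopologicalSpace X] [TopologicalSpace Y] [T1Space Y]
    [Zero Y] : IsOpen {p : X × Y | p.2 ≠ 0} :=
  isOpen_compl_singleton.preimage continuous_snd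

section Finsler

variable {n : ℕ} {F : E n × E n → ℝ} {p : E n × E n}

theorem pdy_pdy {f : E n × E n → ℝ} (hf : DifferentiableAt ℝ (fderiv ℝ f) p) (i j : Fin n) :
    pdy i (pdy j f) p = fibreHessian f p (Pi.single i 1) (Pi.single j 1) := by
  have := hf.hasFDerivAt.clm_apply (hasFDerivAt_const ((0, Pi.single j 1) : E n × E n) p)
  rw [fibreHessian, ContinuousLinearMap.comp_apply, fderiv_fibreDeriv_apply hf]
  exact (DFunLike.congr_fun this.fderiv (0, Pi.single i 1)).trans (by simp)

theorem forall_deriv_pdy_eq_pdx_iff {σ : ℝ → E n × E n} {t : ℝ} {a : E n}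
    (hσ : HasDerivAt σ ((σ t).2, a) t) (hF : ContDiffAt ℝ 2 F (σ t)) :
    (∀ i, deriv (fun s => pdy i F (σ s)) t = pdx i F (σ t)) ↔ SolvesEulerLagrange F (σ t) a := by
  have d_pdy (i : Fin n) : deriv (fun s => pdy i F (σ s)) t =
      fderiv ℝ (fibreDeriv F) (σ t) ((σ t).2, a) (Pi.single i 1) := by
    have := ((differentiableAt_fibreDeriv hF).hasFDerivAt.comp_hasDerivAt t hσ).clm_apply
      (hasDerivAt_const t (Pi.single i 1 : E n))
    exact this.deriv.trans (by simp)
  simp only [d_pdy]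
  refine ⟨fun h => ?_, fun h i => DFunLike.congr_fun h (Pi.single i 1)⟩
  exact ContinuousLinearMap.coe_injective ((Pi.basisFun ℝ (Fin n)).ext fun i => by
    rw [Pi.basisFun_apply]; exact h i)

namespace IsFinsler

theorem contDiffAt (hF : IsFinsler F) (hp : p.2 ≠ 0) : ContDiffAt ℝ (⊤ : ℕ∞) F p :=
  hF.smooth.contDiffAt (isOpen_setOf_snd_ne_zero.mem_nhds hp)

theorem contDiffAt_two (hF : IsFinsler F) (hp : p.2 ≠ 0) : ContDiffAt ℝ 2 F p :=
  (hF.contDiffAt hp).of_le (WithTop.coe_le_coe.2 le_top)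

theorem apply_ne_zero (hF : IsFinsler F) (hp : p.2 ≠ 0) : F p ≠ 0 :=
  (hF.pos p.1 p.2 hp).ne'

theorem apply_zero (hF : IsFinsler F) (x : E n) : F (x, 0) = 0 := by
  have := hF.homog x 0 2 two_pos
  rw [smul_zero] at this
  linarith

theorem fibreDeriv_sq_apply_snd (hF : IsFinsler F) (hp : p.2 ≠ 0) :
    fibreDeriv (F ^ 2) p p.2 = 2 * (F ^ 2) p := by
  refine mod_cast fibreDeriv_apply_snd_of_homogeneous (k := 2)
    (((hF.contDiffAt_two hp).pow 2).differentiableAt two_ne_zero) fun x y c hc => ?_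
  simp only [Pi.pow_apply, hF.homog x y c hc, mul_pow]

theorem fibreHessian_sq_apply_self_pos (hF : IsFinsler F) (hp : p.2 ≠ 0) {v : E n} (hv : v ≠ 0) :
    0 < fibreHessian (F ^ 2) p v v := by
  have hd : DifferentiableAt ℝ (fderiv ℝ (F ^ 2)) p :=
    (((hF.contDiffAt_two hp).pow 2).fderiv_right (m := 1) (by norm_num)).differentiableAt
      one_ne_zero
  have matrix_eq : (Matrix.of fun i j => (1 / 2) * pdy i (pdy j (F ^ 2)) p) =
      (1 / 2 : ℝ) • LinearMap.toMatrix₂' ℝ (fibreHessian (F ^ 2) p).toLinearMap₁₂ := by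
    ext i j
    simp [pdy_pdy hd]
  have pos : 0 < star v ⬝ᵥ (Matrix.of fun i j => (1 / 2) * pdy i (pdy j (F ^ 2)) p).mulVec v :=
    (hF.posDef p.1 p.2 hp).dotProduct_mulVec_pos hv
  rw [matrix_eq, Matrix.smul_mulVec, dotProduct_smul, star_trivial, ← Matrix.toLinearMap₂'_apply',
    Matrix.toLinearMap₂'_toMatrix'] at pos
  simpa using pos

theorem isInvertible_fibreHessian_sq (hF : IsFinsler F) (hp : p.2 ≠ 0) :
    (fibreHessian (F ^ 2) p).IsInvertible :=
  isInvertible_of_forall_apply_self_pos fun _ hv => hF.fibreHessian_sq_apply_self_pos hp hv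

theorem contDiffAt_lagrangianAccel_sq (hF : IsFinsler F) (hp : p.2 ≠ 0) :
    ContDiffAt ℝ 1 (lagrangianAccel (F ^ 2)) p :=
  contDiffAt_lagrangianAccel ((hF.contDiffAt hp).pow 2) (WithTop.coe_le_coe.2 le_top)
    (hF.isInvertible_fibreHessian_sq hp)

theorem fderiv_sq_apply_eq_zero_of_solvesEulerLagrange (hF : IsFinsler F) (hp : p.2 ≠ 0) {a : E n}
    (ha : SolvesEulerLagrange (F ^ 2) p a) : fderiv ℝ (F ^ 2) p (p.2, a) = 0 :=
  ha.fderiv_apply_eq_zero ((hF.contDiffAt_two hp).pow 2) <| by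
    filter_upwards [isOpen_setOf_snd_ne_zero.mem_nhds hp] with q hq
      using hF.fibreDeriv_sq_apply_snd hq

theorem solvesEulerLagrange_sq_iff (hF : IsFinsler F) (hp : p.2 ≠ 0) {a : E n} :
    SolvesEulerLagrange (F ^ 2) p a ↔
      fderiv ℝ F p (p.2, a) = 0 ∧ SolvesEulerLagrange F p a := by
  have hF₂ := hF.contDiffAt_two hp
  refine ⟨fun h => ?_, fun ⟨h₀, h⟩ =>
    (solvesEulerLagrange_sq_iff_of_fderiv_eq_zero hF₂ (hF.apply_ne_zero hp) h₀).2 h⟩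
  have h₀ : fderiv ℝ F p (p.2, a) = 0 := by
    have := hF.fderiv_sq_apply_eq_zero_of_solvesEulerLagrange hp h
    rw [fderiv_pow 2 (hF₂.differentiableAt two_ne_zero)] at this
    simpa [hF.apply_ne_zero hp] using this
  exact ⟨h₀, (solvesEulerLagrange_sq_iff_of_fderiv_eq_zero hF₂ (hF.apply_ne_zero hp) h₀).1 h⟩

theorem lagrangianAccel_eq_zero_iff (hF : IsFinsler F) :
    (∀ p : E n × E n, p.2 ≠ 0 → lagrangianAccel (F ^ 2) p = 0) ↔
      ∀ x x' y : E n, F (x, y) = F (x', y) := by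
  have solves_iff {p : E n × E n} (hp : p.2 ≠ 0) :
      SolvesEulerLagrange (F ^ 2) p 0 ↔ lagrangianAccel (F ^ 2) p = 0 := by
    rw [solvesEulerLagrange_iff_eq_lagrangianAccel (hF.isInvertible_fibreHessian_sq hp), eq_comm]
  refine ⟨fun h x x' y => ?_, fun h p hp => ?_⟩
  · rcases eq_or_ne y 0 with rfl | hy
    · rw [hF.apply_zero, hF.apply_zero]
    have smooth (q : E n × E n) (hq : q.2 ≠ 0) : ContDiffAt ℝ 2 (F ^ 2) q :=
      (hF.contDiffAt_two hq).pow 2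
    have base (z : E n) : baseDeriv (F ^ 2) (z, y) = 0 := by
      refine baseDeriv_eq_zero_of_solvesEulerLagrange_zero (smooth _ hy) ?_
        ((solves_iff hy).2 (h _ hy))
      filter_upwards [isOpen_setOf_snd_ne_zero.mem_nhds hy] with q hq
        using hF.fderiv_sq_apply_eq_zero_of_solvesEulerLagrange hq
          ((solves_iff hq).2 (h q hq))
    refine (sq_eq_sq₀ (hF.pos x y hy).le (hF.pos x' y hy).le).1 ?_
    exact apply_eq_of_forall_baseDeriv_eq_zero
      (fun z => (smooth (z, y) hy).differentiableAt two_ne_zero) base x x'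
  · refine (solves_iff hp).1 (solvesEulerLagrange_zero_of_forall_fst (fun x x' y => ?_) p)
    simp only [Pi.pow_apply, h x x' y]

end IsFinsler

theorem IsGeodesic.hasDerivAt_deriv {γ : ℝ → E n} {t₁ t₂ t : ℝ} (hγ : IsGeodesic F γ t₁ t₂)
    (hF : IsFinsler F) (ht : t ∈ Set.Ioo t₁ t₂) :
    HasDerivAt γ (deriv γ t) t ∧
      HasDerivAt (deriv γ) (lagrangianAccel (F ^ 2) (γ t, deriv γ t)) t := by
  obtain ⟨hγ₁, hγ₂⟩ := hasDerivAt_deriv_of_contDiffOn_two isOpen_Ioo hγ.smooth ht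
  obtain ⟨c, -, hc⟩ := hγ.constSpeed
  have hp : (γ t, deriv γ t).2 ≠ 0 := hγ.vel t ht
  have hF₂ := hF.contDiffAt_two hp
  have speed : fderiv ℝ F (γ t, deriv γ t) (deriv γ t, deriv (deriv γ) t) = 0 := by
    have := (hF₂.differentiableAt two_ne_zero).hasFDerivAt.comp_hasDerivAt t (hγ₁.prodMk hγ₂)
    refine this.unique ((hasDerivAt_const t c).congr_of_eventuallyEq ?_)
    filter_upwards [isOpen_Ioo.mem_nhds ht] with s hs using hc s hs
  have equation : SolvesEulerLagrange F (γ t, deriv γ t) (deriv (deriv γ) t) :=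
    (forall_deriv_pdy_eq_pdx_iff (hγ₁.prodMk hγ₂) hF₂).1 fun i => hγ.eulerLagrange i t ht
  rw [← (solvesEulerLagrange_iff_eq_lagrangianAccel (hF.isInvertible_fibreHessian_sq hp)).1
    ((hF.solvesEulerLagrange_sq_iff hp).2 ⟨speed, equation⟩)]
  exact ⟨hγ₁, hγ₂⟩

theorem IsFinsler.isGeodesic_of_hasDerivAt (hF : IsFinsler F) {γ v : ℝ → E n} {t₁ t₂ : ℝ}
    (hlt : t₁ < t₂) (hv : ∀ t ∈ Set.Ioo t₁ t₂, v t ≠ 0)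
    (hγ : ∀ t ∈ Set.Ioo t₁ t₂, HasDerivAt γ (v t) t)
    (hv' : ∀ t ∈ Set.Ioo t₁ t₂, HasDerivAt v (lagrangianAccel (F ^ 2) (γ t, v t)) t) :
    IsGeodesic F γ t₁ t₂ := by
  have hderiv : Set.EqOn (deriv γ) v (Set.Ioo t₁ t₂) := fun t ht => (hγ t ht).deriv
  have hσ : ∀ t ∈ Set.Ioo t₁ t₂, HasDerivAt (fun s => (γ s, v s))
      (v t, lagrangianAccel (F ^ 2) (γ t, v t)) t := fun t ht => (hγ t ht).prodMk (hv' t ht)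
  have equation : ∀ t ∈ Set.Ioo t₁ t₂,
      fderiv ℝ F (γ t, v t) (v t, lagrangianAccel (F ^ 2) (γ t, v t)) = 0 ∧
        SolvesEulerLagrange F (γ t, v t) (lagrangianAccel (F ^ 2) (γ t, v t)) := fun t ht =>
    (hF.solvesEulerLagrange_sq_iff (hv t ht)).1 <|
      (solvesEulerLagrange_iff_eq_lagrangianAccel
        (hF.isInvertible_fibreHessian_sq (p := (γ t, v t)) (hv t ht))).2 rfl
  have speed : ∀ t ∈ Set.Ioo t₁ t₂, HasDerivAt (fun s => F (γ s, v s)) 0 t := fun t ht => by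
    have hFd := (hF.contDiffAt_two (p := (γ t, v t)) (hv t ht)).differentiableAt two_ne_zero
    rw [← (equation t ht).1]
    exact hFd.hasFDerivAt.comp_hasDerivAt t (hσ t ht)
  have accel_continuous :
      ContinuousOn (fun t => lagrangianAccel (F ^ 2) (γ t, v t)) (Set.Ioo t₁ t₂) := fun t ht =>
    ((hF.contDiffAt_lagrangianAccel_sq (p := (γ t, v t)) (hv t ht)).continuousAt.comp
      (f := fun s => (γ s, v s)) (hσ t ht).continuousAt).continuousWithinAt
  obtain ⟨c, hc⟩ := isOpen_Ioo.exists_is_const_of_deriv_eq_zero isPreconnected_Ioo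
    (fun t ht => (speed t ht).differentiableAt.differentiableWithinAt)
    fun t ht => (speed t ht).deriv
  obtain ⟨t₀, ht₀⟩ := Set.nonempty_Ioo.2 hlt
  refine
    { lt := hlt
      smooth := contDiffOn_two_of_hasDerivAt isOpen_Ioo hγ hv' accel_continuous
      vel := fun t ht => by rw [hderiv ht]; exact hv t ht
      constSpeed :=
        ⟨c, hc t₀ ht₀ ▸ hF.pos _ _ (hv t₀ ht₀), fun t ht => by rw [hderiv ht, hc t ht]⟩
      eulerLagrange := fun i t ht => ?_ }
  have near : (fun s => pdy i F (γ s, deriv γ s)) =ᶠ[𝓝 t] fun s => pdy i F (γ s, v s) := by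
    filter_upwards [isOpen_Ioo.mem_nhds ht] with s hs using by rw [hderiv hs]
  rw [near.deriv_eq, hderiv ht]
  exact (forall_deriv_pdy_eq_pdx_iff (hσ t ht)
    (hF.contDiffAt_two (hv t ht))).2 (equation t ht).2 i

theorem IsFinsler.exists_isGeodesic (hF : IsFinsler F) (hp : p.2 ≠ 0) :
    ∃ (γ : ℝ → E n) (ε : ℝ), 0 < ε ∧ IsGeodesic F γ (-ε) ε ∧ (γ 0, deriv γ 0) = p := by
  obtain ⟨γ, v, ε, hε, h₀, h⟩ := exists_hasDerivAt_secondOrder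
    (hF.contDiffAt_lagrangianAccel_sq hp) (isOpen_setOf_snd_ne_zero.mem_nhds hp)
  refine ⟨γ, ε, hε, hF.isGeodesic_of_hasDerivAt (by linarith) (fun t ht => (h t ht).1)
    (fun t ht => (h t ht).2.1) fun t ht => (h t ht).2.2, ?_⟩
  rw [(h 0 ⟨by linarith, hε⟩).2.1.deriv, h₀]

theorem paramFlat_iff_lagrangianAccel_eq_zero (hF : IsFinsler F) :
    ParamFlat F ↔ ∀ p : E n × E n, p.2 ≠ 0 → lagrangianAccel (F ^ 2) p = 0 := by
  refine ⟨fun h p hp => ?_, fun h γ t₁ t₂ hγ => ?_⟩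
  · obtain ⟨γ, ε, hε, hγ, rfl⟩ := hF.exists_isGeodesic hp
    obtain ⟨a, b, -, hab⟩ := h γ _ _ hγ
    have h₀ : (0 : ℝ) ∈ Set.Ioo (-ε) ε := ⟨by linarith, hε⟩
    have velocity : deriv γ =ᶠ[𝓝 0] fun _ => a := by
      filter_upwards [isOpen_Ioo.mem_nhds h₀] with t ht
      have line : γ =ᶠ[𝓝 t] fun s => s • a + b :=
        Set.EqOn.eventuallyEq_of_mem hab (isOpen_Ioo.mem_nhds ht)
      simpa using (((hasDerivAt_id t).smul_const a).add_const b).congr_of_eventuallyEq line |>.deriv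
    exact (hγ.hasDerivAt_deriv hF h₀).2.unique
      ((hasDerivAt_const 0 a).congr_of_eventuallyEq velocity)
  · obtain ⟨a, b, hab⟩ := exists_eq_smul_add_of_hasDerivAt_deriv_zero isOpen_Ioo isPreconnected_Ioo
      (fun t ht => (hγ.hasDerivAt_deriv hF ht).1) fun t ht => by
        simpa only [h _ (show (γ t, deriv γ t).2 ≠ 0 from hγ.vel t ht)]
          using (hγ.hasDerivAt_deriv hF ht).2
    obtain ⟨t₀, ht₀⟩ := Set.nonempty_Ioo.2 hγ.lt
    exact ⟨a, b, (hab t₀ ht₀).1 ▸ hγ.vel t₀ ht₀, fun t ht => (hab t ht).2⟩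

end Finsler

/-- `(ℝⁿ, F)` is projectively flat in a parameter-preserving manner iff it
is a Minkowski space, i.e. `F` does not depend on its first argument. -/
theorem statement11 {n : ℕ} (F : E n × E n → ℝ) (hF : IsFinsler F) :
    ParamFlat F ↔ (∀ x x' y : E n, F (x, y) = F (x', y)) :=
  (paramFlat_iff_lagrangianAccel_eq_zero hF).trans hF.lagrangianAccel_eq_zero_iff
end
end

section
/- Let F be a Finsler function on ℝⁿ such that (ℝⁿ, F) is projectively flat in a parameter-preserving manner in the standard coordinates, and assume that for every x ∈ ℝⁿ and every y ≠ 0 there exists a geodesic γ with γ(0) = x and γ'(0) = y. Then ∑_k ∂F/∂x^k(x,y)·y^k = 0 for every x ∈ ℝⁿ and every y ∈ ℝⁿ ∖ {0}. -/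
open scoped BigOperators Topology
noncomputable section

/-!
A geodesic parametrized as `t • a + b` has constant velocity `a`, so constancy of the speed says
that `F (b + t • a, a)` does not depend on `t`. Differentiating in `t` gives the claim.
-/

section Line

variable {𝕜 V W : Type*} [NontriviallyNormedField 𝕜] [NormedAddCommGroup V] [NormedSpace 𝕜 V]
  [NormedAddCommGroup W] [NormedSpace 𝕜 W]

lemma deriv_eq_of_eqOn_smul_add {γ : 𝕜 → V} {a b : V} {s : Set 𝕜} {t : 𝕜} (hs : IsOpen s)
    (hγ : Set.EqOn γ (fun u => u • a + b) s) (ht : t ∈ s) : deriv γ t = a := by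
  have hline : HasDerivAt (fun u : 𝕜 => u • a + b) a t := by
    simpa using ((hasDerivAt_id t).smul_const a).add_const b
  rw [(hγ.eventuallyEq_of_mem (hs.mem_nhds ht)).deriv_eq, hline.deriv]

lemma fderiv_apply_eq_zero_of_eventually_eq_const {f : V → W} {p v : V} {c : W}
    (hf : DifferentiableAt 𝕜 f p) (hconst : ∀ᶠ t : 𝕜 in 𝓝 0, f (p + t • v) = c) :
    fderiv 𝕜 f p v = 0 := by
  rw [← hf.lineDeriv_eq_fderiv, lineDeriv, Filter.EventuallyEq.deriv_eq hconst, deriv_const]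

end Line

section Finsler

variable {n : ℕ} {F : E n × E n → ℝ}

lemma sum_pdx_mul_eq_fderiv (f : E n × E n → ℝ) (p : E n × E n) (v : E n) :
    ∑ k, pdx k f p * v k = fderiv ℝ f p (v, 0) := by
  have hv : ((v, 0) : E n × E n) = ∑ k, v k • (Pi.single k 1, 0) := by
    simpa using congrArg (LinearMap.inl ℝ (E n) (E n)) (pi_eq_sum_univ' v)
  simp only [hv, map_sum, map_smul, smul_eq_mul, pdx, mul_comm]

lemma IsFinsler.differentiableAt (hF : IsFinsler F) (x : E n) {y : E n} (hy : y ≠ 0) :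
    DifferentiableAt ℝ F (x, y) :=
  have hopen : IsOpen {p : E n × E n | p.2 ≠ 0} := isOpen_ne_fun continuous_snd continuous_const
  (hF.smooth.contDiffAt (hopen.mem_nhds hy)).differentiableAt (by simp)

lemma ParamFlat.exists_eq_smul_add_and_deriv_eq {γ : ℝ → E n} {t₁ t₂ : ℝ} (hflat : ParamFlat F)
    (hγ : IsGeodesic F γ t₁ t₂) :
    ∃ a b : E n, ∀ t ∈ Set.Ioo t₁ t₂, γ t = t • a + b ∧ deriv γ t = a := by
  obtain ⟨a, b, -, hline⟩ := hflat γ t₁ t₂ hγ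
  exact ⟨a, b, fun t ht => ⟨hline t ht, deriv_eq_of_eqOn_smul_add isOpen_Ioo hline ht⟩⟩

lemma ParamFlat.exists_eventually_apply_add_smul_eq {γ : ℝ → E n} {t₁ t₂ t : ℝ}
    (hflat : ParamFlat F) (hγ : IsGeodesic F γ t₁ t₂) (ht : t ∈ Set.Ioo t₁ t₂) :
    ∃ c, ∀ᶠ s : ℝ in 𝓝 0, F ((γ t, deriv γ t) + s • (deriv γ t, 0)) = c := by
  obtain ⟨a, b, hline⟩ := hflat.exists_eq_smul_add_and_deriv_eq hγ
  obtain ⟨c, -, hspeed⟩ := hγ.constSpeed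
  have hmem : ∀ᶠ s : ℝ in 𝓝 0, t + s ∈ Set.Ioo t₁ t₂ :=
    (continuous_const_add t).continuousAt.eventually_mem
      (isOpen_Ioo.mem_nhds (by simpa only [add_zero] using ht))
  refine ⟨c, hmem.mono fun s hs => ?_⟩
  have hlift : (γ t, deriv γ t) + s • (deriv γ t, 0) = (γ (t + s), deriv γ (t + s)) := by
    obtain ⟨hγt, hγ't⟩ := hline t ht
    obtain ⟨hγs, hγ's⟩ := hline (t + s) hs
    rw [hγs, hγ's, hγ't, hγt]
    ext <;> simp [add_mul, add_right_comm]
  rw [hlift, hspeed _ hs]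

theorem statement12_general {γ : ℝ → E n} {t₁ t₂ t : ℝ} (hflat : ParamFlat F)
    (hγ : IsGeodesic F γ t₁ t₂) (ht : t ∈ Set.Ioo t₁ t₂)
    (hF : DifferentiableAt ℝ F (γ t, deriv γ t)) :
    ∑ k, pdx k F (γ t, deriv γ t) * deriv γ t k = 0 := by
  obtain ⟨c, hc⟩ := hflat.exists_eventually_apply_add_smul_eq hγ ht
  rw [sum_pdx_mul_eq_fderiv, fderiv_apply_eq_zero_of_eventually_eq_const hF hc]

end Finsler

/-- if `(ℝⁿ, F)` is projectively flat in a parameter-preserving manner and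
through every `(x, y)`, `y ≠ 0`, there passes a geodesic, then `∑_k ∂F/∂x^k · y^k = 0`. -/
theorem statement12 {n : ℕ} (F : E n × E n → ℝ) (hF : IsFinsler F)
    (hflat : ParamFlat F)
    (hexist : ∀ (x y : E n), y ≠ 0 → ∃ (γ : ℝ → E n) (t₁ t₂ : ℝ),
      t₁ < 0 ∧ 0 < t₂ ∧ IsGeodesic F γ t₁ t₂ ∧ γ 0 = x ∧ deriv γ 0 = y) :
    ∀ (x y : E n), y ≠ 0 → ∑ k, pdx k F (x, y) * y k = 0 := by
  intro x y hy
  obtain ⟨γ, t₁, t₂, h₁, h₂, hγ, rfl, rfl⟩ := hexist x y hy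
  exact statement12_general hflat hγ ⟨h₁, h₂⟩ (hF.differentiableAt _ hy)
end
end

section
/- Let F be a Finsler function on ℝⁿ. Then F is independent of its first argument (i.e. (ℝⁿ, F) is a Minkowski space: F(x,y) = F(x',y) for all x, x', y) if and only if for every x ∈ ℝⁿ, every y ≠ 0 and every index i: ∑_k ∂²(F²)/∂x^k∂y^i(x,y)·y^k = ½·∑_k ∂²(F²)/∂x^i∂y^k(x,y)·y^k. -/
open scoped BigOperators Topology
noncomputable section

/-!
Let `L` be positively `r`-homogeneous in the fibre variable and write `λ v` for its derivative at
`(x, y)` in the base direction `v`. Differentiating Euler's relation `D L (0, y) = r L` along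
`(v, 0)` gives `D² L (v, 0) (0, y) = r λ v`, so the Hamel equations with factor `c` read
`D² L (y, 0) (0, v) = c r λ v`. For `v = y` the two second derivatives coincide, so `λ y = 0` as
soon as `r ≠ 0` and `c ≠ 1`. Differentiating the identity `λ y = 0` along `(0, v)` then yields
`(c r + 1) λ v = 0`, and `L` does not depend on `x` if moreover `c r ≠ -1`. For `L = F²` one has
`r = 2` and `c = 1 / 2`.
-/

/-- A function on the trivial bundle `X × V → X` that does not depend on the base point. -/
def IsBaseIndependent {X V W : Type*} (L : X × V → W) : Prop :=
  ∀ x x' y, L (x, y) = L (x', y)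

/-- Positive homogeneity of degree `r` on the fibres of the trivial bundle `X × V → X`. The zero
vector is included, which forces `L (x, 0) = 0` when `r ≠ 0`. -/
def IsFiberHomogeneous {X V W : Type*} [SMul ℝ V] [SMul ℝ W] (r : ℝ) (L : X × V → W) : Prop :=
  ∀ x y (t : ℝ), 0 < t → L (x, t • y) = t ^ r • L (x, y)

/-- The Hamel equations with a factor `c` on one side, written without coordinates; `c = 1` gives
the usual ones, as in `SatisfiesHamel`. In `fderiv ℝ (fderiv ℝ L) p u w` the derivative along `w`
is taken first. -/
def SatisfiesScaledHamel {V W : Type*} [NormedAddCommGroup V] [NormedSpace ℝ V]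
    [NormedAddCommGroup W] [NormedSpace ℝ W] (c : ℝ) (L : V × V → W) : Prop :=
  ∀ p : V × V, p.2 ≠ 0 → ∀ v : V,
    fderiv ℝ (fderiv ℝ L) p (p.2, 0) (0, v) = c • fderiv ℝ (fderiv ℝ L) p (v, 0) (0, p.2)

lemma IsFiberHomogeneous.map_zero {X V W : Type*} [Zero V] [SMulZeroClass ℝ V] [AddCommGroup W]
    [Module ℝ W] {r : ℝ} {L : X × V → W} (hL : IsFiberHomogeneous r L) (hr : r ≠ 0) (x : X) :
    L (x, 0) = 0 := by
  have fixed : L (x, 0) = (2 : ℝ) ^ r • L (x, 0) := by simpa using hL x 0 2 two_pos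
  have two_rpow_ne_one : (2 : ℝ) ^ r ≠ 1 := by
    rwa [← Real.rpow_zero 2, Ne, Real.rpow_right_inj two_pos (by norm_num)]
  have h : ((2 : ℝ) ^ r - 1) • L (x, 0) = 0 := by
    rw [sub_smul, one_smul, ← fixed, sub_self]
  exact (smul_eq_zero.mp h).resolve_left (sub_ne_zero.mpr two_rpow_ne_one)

section General

variable {X V W : Type*} [NormedAddCommGroup X] [NormedSpace ℝ X] [NormedAddCommGroup V]
  [NormedSpace ℝ V] [NormedAddCommGroup W] [NormedSpace ℝ W]

protected lemma IsBaseIndependent.fderiv {L : X × V → W} (hL : IsBaseIndependent L) :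
    IsBaseIndependent (fderiv ℝ L) := by
  intro x x' y
  have translate : (fun p => L (p + (x' - x, 0))) = L := by
    ext ⟨a, b⟩
    simpa using hL (a + (x' - x)) a b
  simpa [translate] using fderiv_comp_add_right (𝕜 := ℝ) (f := L) (x := (x, y)) (x' - x, 0)

lemma IsBaseIndependent.fderiv_base_eq_zero {L : X × V → W} (hL : IsBaseIndependent L)
    (p : X × V) (v : X) : fderiv ℝ L p (v, 0) = 0 := by
  by_cases hd : DifferentiableAt ℝ L p
  · have const_line : (fun t : ℝ => L (p + t • (v, 0))) = fun _ => L p := by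
      ext t
      simpa [Prod.add_def] using hL (p.1 + t • v) p.1 p.2
    rw [← hd.lineDeriv_eq_fderiv, lineDeriv, const_line, deriv_const]
  · rw [fderiv_zero_of_not_differentiableAt hd, zero_apply]

lemma IsBaseIndependent.satisfiesScaledHamel {L : V × V → W} (hL : IsBaseIndependent L) (c : ℝ) :
    SatisfiesScaledHamel c L := by
  intro p _ v
  simp only [hL.fderiv.fderiv_base_eq_zero, zero_apply, smul_zero]

lemma IsFiberHomogeneous.fderiv_fiber_self {r : ℝ} {L : X × V → W} (hL : IsFiberHomogeneous r L)
    {p : X × V} (hd : DifferentiableAt ℝ L p) : fderiv ℝ L p (0, p.2) = r • L p := by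
  obtain ⟨x, y⟩ := p
  have ray : HasDerivAt (fun t : ℝ => (x, t • y)) (0, y) 1 := by
    simpa using (hasDerivAt_const 1 x).prodMk ((hasDerivAt_id (1 : ℝ)).smul_const y)
  have along_ray : HasDerivAt (fun t : ℝ => L (x, t • y)) (fderiv ℝ L (x, y) (0, y)) 1 :=
    HasFDerivAt.comp_hasDerivAt 1 (by simpa using hd.hasFDerivAt) ray
  have of_rpow : HasDerivAt (fun t : ℝ => t ^ r • L (x, y)) (r • L (x, y)) 1 := by
    simpa using (Real.hasDerivAt_rpow_const (p := r) (Or.inl one_ne_zero)).smul_const (L (x, y))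
  refine along_ray.unique (of_rpow.congr_of_eventuallyEq ?_)
  filter_upwards [lt_mem_nhds one_pos] with t ht using hL x y t ht

lemma differentiableAt_fderiv_of_contDiffAt_two {L : X → W} {p : X} (hL : ContDiffAt ℝ 2 L p) :
    DifferentiableAt ℝ (fderiv ℝ L) p :=
  (hL.fderiv_right (m := 1) (by norm_num)).differentiableAt one_ne_zero

lemma fderiv_fderiv_apply_clm {L : X → W} {p : X} (hL : DifferentiableAt ℝ (fderiv ℝ L) p)
    (T : X →L[ℝ] X) (u : X) :
    fderiv ℝ (fun q => fderiv ℝ L q (T q)) p u =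
      fderiv ℝ (fderiv ℝ L) p u (T p) + fderiv ℝ L p (T u) := by
  rw [fderiv_clm_apply hL T.differentiableAt, T.fderiv, add_comm]
  rfl

lemma IsFiberHomogeneous.fderiv_fderiv_base_fiber_self {r : ℝ} {L : X × V → W}
    (hL : IsFiberHomogeneous r L) {p : X × V} (hC : ContDiffAt ℝ 2 L p) (v : X) :
    fderiv ℝ (fderiv ℝ L) p (v, 0) (0, p.2) = r • fderiv ℝ L p (v, 0) := by
  let T : X × V →L[ℝ] X × V := .inr ℝ X V ∘L .snd ℝ X V
  have euler : (fun q => fderiv ℝ L q (T q)) =ᶠ[𝓝 p] fun q => r • L q := by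
    filter_upwards [hC.eventually (by simp)] with q hq
    exact hL.fderiv_fiber_self (hq.differentiableAt two_ne_zero)
  have h := fderiv_fderiv_apply_clm (differentiableAt_fderiv_of_contDiffAt_two hC) T (v, 0)
  have hT : T (v, 0) = 0 := rfl
  rw [euler.fderiv_eq, fderiv_fun_const_smul (hC.differentiableAt two_ne_zero), hT,
    _root_.map_zero, add_zero] at h
  exact h.symm

lemma apply_eq_of_fderiv_base_eq_zero {L : X × V → W} {y : V}
    (hd : ∀ x, DifferentiableAt ℝ L (x, y)) (h0 : ∀ x v, fderiv ℝ L (x, y) (v, 0) = 0) (x x' : X) :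
    L (x, y) = L (x', y) := by
  have hderiv (a : X) : HasFDerivAt (fun a => L (a, y)) (fderiv ℝ L (a, y) ∘L .inl ℝ X V) a :=
    (hd a).hasFDerivAt.comp a (hasFDerivAt_prodMk_left a y)
  refine is_const_of_fderiv_eq_zero (𝕜 := ℝ) (fun a => (hderiv a).differentiableAt)
    (fun a => ?_) x x'
  rw [(hderiv a).fderiv]
  ext v
  exact h0 a v

section ScaledHamel

variable {r c : ℝ} {L : V × V → W}

lemma SatisfiesScaledHamel.fderiv_fderiv_self_fiber (hH : SatisfiesScaledHamel c L)
    (hL : IsFiberHomogeneous r L) {p : V × V} (hp : p.2 ≠ 0) (hC : ContDiffAt ℝ 2 L p) (v : V) :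
    fderiv ℝ (fderiv ℝ L) p (p.2, 0) (0, v) = (c * r) • fderiv ℝ L p (v, 0) := by
  rw [hH p hp v, hL.fderiv_fderiv_base_fiber_self hC, smul_smul]

lemma SatisfiesScaledHamel.fderiv_base_self_eq_zero (hH : SatisfiesScaledHamel c L)
    (hL : IsFiberHomogeneous r L) (hr : r ≠ 0) (hc : c ≠ 1) {p : V × V} (hp : p.2 ≠ 0)
    (hC : ContDiffAt ℝ 2 L p) : fderiv ℝ L p (p.2, 0) = 0 := by
  have h : (c * r) • fderiv ℝ L p (p.2, 0) = r • fderiv ℝ L p (p.2, 0) :=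
    (hH.fderiv_fderiv_self_fiber hL hp hC p.2).symm.trans
      (hL.fderiv_fderiv_base_fiber_self hC p.2)
  have h' : ((c - 1) * r) • fderiv ℝ L p (p.2, 0) = 0 := by
    rw [sub_mul, one_mul, sub_smul, h, sub_self]
  exact (smul_eq_zero.mp h').resolve_left (mul_ne_zero (sub_ne_zero.mpr hc) hr)

lemma fderiv_fderiv_self_fiber_of_base_self_eq_zero {p : V × V} (hC : ContDiffAt ℝ 2 L p)
    (h0 : ∀ᶠ q in 𝓝 p, fderiv ℝ L q (q.2, 0) = 0) (v : V) :
    fderiv ℝ (fderiv ℝ L) p (p.2, 0) (0, v) = -fderiv ℝ L p (v, 0) := by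
  let T : V × V →L[ℝ] V × V := .inl ℝ V V ∘L .snd ℝ V V
  have vanish : (fun q => fderiv ℝ L q (T q)) =ᶠ[𝓝 p] fun _ => 0 := h0
  have h := fderiv_fderiv_apply_clm (differentiableAt_fderiv_of_contDiffAt_two hC) T (0, v)
  rw [vanish.fderiv_eq, fderiv_fun_const, Pi.zero_apply, zero_apply,
    (hC.isSymmSndFDerivAt (by simp)).eq] at h
  exact eq_neg_of_add_eq_zero_left h.symm

lemma SatisfiesScaledHamel.fderiv_base_eq_zero (hH : SatisfiesScaledHamel c L)
    (hL : IsFiberHomogeneous r L) (hC : ∀ p : V × V, p.2 ≠ 0 → ContDiffAt ℝ 2 L p)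
    (hr : r ≠ 0) (hc : c ≠ 1) (hcr : c * r ≠ -1) {p : V × V} (hp : p.2 ≠ 0) (v : V) :
    fderiv ℝ L p (v, 0) = 0 := by
  have base_self : ∀ᶠ q in 𝓝 p, fderiv ℝ L q (q.2, 0) = 0 := by
    filter_upwards [continuous_snd.continuousAt.eventually_ne hp] with q hq
    exact hH.fderiv_base_self_eq_zero hL hr hc hq (hC q hq)
  have h : (c * r) • fderiv ℝ L p (v, 0) = -fderiv ℝ L p (v, 0) :=
    (hH.fderiv_fderiv_self_fiber hL hp (hC p hp) v).symm.trans
      (fderiv_fderiv_self_fiber_of_base_self_eq_zero (hC p hp) base_self v)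
  have h' : (c * r + 1) • fderiv ℝ L p (v, 0) = 0 := by
    rw [add_smul, one_smul, h, neg_add_cancel]
  exact (smul_eq_zero.mp h').resolve_left fun h => hcr (eq_neg_of_add_eq_zero_left h)

theorem statement13_general (hL : IsFiberHomogeneous r L)
    (hC : ∀ p : V × V, p.2 ≠ 0 → ContDiffAt ℝ 2 L p)
    (hr : r ≠ 0) (hc : c ≠ 1) (hcr : c * r ≠ -1) :
    IsBaseIndependent L ↔ SatisfiesScaledHamel c L := by
  refine ⟨fun h => h.satisfiesScaledHamel c, fun hH x x' y => ?_⟩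
  by_cases hy : y = 0
  · rw [hy, hL.map_zero hr, hL.map_zero hr]
  · exact apply_eq_of_fderiv_base_eq_zero (fun a => (hC (a, y) hy).differentiableAt two_ne_zero)
      (fun _ => hH.fderiv_base_eq_zero hL hC hr hc hcr hy) x x'

end ScaledHamel

end General

section Coordinates

variable {n : ℕ} {L : E n × E n → ℝ}

lemma pdx_pdy_eq_fderiv_fderiv {p : E n × E n} (hL : DifferentiableAt ℝ (fderiv ℝ L) p)
    (k i : Fin n) :
    pdx k (pdy i L) p = fderiv ℝ (fderiv ℝ L) p (Pi.single k 1, 0) (0, Pi.single i 1) := by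
  change fderiv ℝ (fun q => fderiv ℝ L q (0, Pi.single i 1)) p (Pi.single k 1, 0) = _
  rw [fderiv_clm_apply hL (differentiableAt_const _)]
  simp

lemma sum_apply_single_mul {ι : Type*} [Fintype ι] [DecidableEq ι] (T : (ι → ℝ) →ₗ[ℝ] ℝ)
    (y : ι → ℝ) : ∑ k, T (Pi.single k 1) * y k = T y := by
  conv_rhs => rw [pi_eq_sum_univ' y, map_sum]
  simp only [map_smul, smul_eq_mul, mul_comm]

lemma sum_pdx_pdy_mul_base {p : E n × E n} (hL : DifferentiableAt ℝ (fderiv ℝ L) p)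
    (y : E n) (i : Fin n) :
    ∑ k, pdx k (pdy i L) p * y k = fderiv ℝ (fderiv ℝ L) p (y, 0) (0, Pi.single i 1) := by
  simp only [pdx_pdy_eq_fderiv_fderiv hL]
  exact sum_apply_single_mul
    (((fderiv ℝ (fderiv ℝ L) p).flip (0, Pi.single i 1)) ∘L .inl ℝ (E n) (E n)).toLinearMap y

lemma sum_pdx_pdy_mul_fiber {p : E n × E n} (hL : DifferentiableAt ℝ (fderiv ℝ L) p)
    (y : E n) (i : Fin n) :
    ∑ k, pdx i (pdy k L) p * y k = fderiv ℝ (fderiv ℝ L) p (Pi.single i 1, 0) (0, y) := by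
  simp only [pdx_pdy_eq_fderiv_fderiv hL]
  exact sum_apply_single_mul
    ((fderiv ℝ (fderiv ℝ L) p (Pi.single i 1, 0)) ∘L .inr ℝ (E n) (E n)).toLinearMap y

lemma satisfiesScaledHamel_iff_sum_pdx_pdy
    (hL : ∀ p : E n × E n, p.2 ≠ 0 → DifferentiableAt ℝ (fderiv ℝ L) p) (c : ℝ) :
    SatisfiesScaledHamel c L ↔ ∀ x y : E n, y ≠ 0 → ∀ i : Fin n,
      ∑ k, pdx k (pdy i L) (x, y) * y k = c * ∑ k, pdx i (pdy k L) (x, y) * y k := by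
  rw [SatisfiesScaledHamel, Prod.forall]
  refine forall₃_congr fun x y hy => ?_
  simp only [sum_pdx_pdy_mul_base (hL (x, y) hy), sum_pdx_pdy_mul_fiber (hL (x, y) hy)]
  let A : E n →ₗ[ℝ] ℝ :=
    (fderiv ℝ (fderiv ℝ L) (x, y) (y, 0) ∘L .inr ℝ (E n) (E n)).toLinearMap
  let B : E n →ₗ[ℝ] ℝ :=
    ((fderiv ℝ (fderiv ℝ L) (x, y)).flip (0, y) ∘L .inl ℝ (E n) (E n)).toLinearMap
  change (∀ v, A v = (c • B) v) ↔ ∀ i, A (Pi.single i 1) = (c • B) (Pi.single i 1)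
  exact ⟨fun h i => h _, fun h =>
    LinearMap.congr_fun ((Pi.basisFun ℝ (Fin n)).ext (by simpa only [Pi.basisFun_apply] using h))⟩

end Coordinates

namespace IsFinsler

variable {n : ℕ} {F : E n × E n → ℝ}

lemma contDiffAt_sq (hF : IsFinsler F) {p : E n × E n} (hp : p.2 ≠ 0) :
    ContDiffAt ℝ 2 (fun p => F p ^ 2) p :=
  have slit_mem_nhds : {q : E n × E n | q.2 ≠ 0} ∈ 𝓝 p :=
    (isOpen_ne_fun continuous_snd continuous_const).mem_nhds hp
  ((hF.smooth.contDiffAt slit_mem_nhds).pow 2).of_le (WithTop.coe_le_coe.mpr le_top)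

lemma isFiberHomogeneous (hF : IsFinsler F) : IsFiberHomogeneous 1 F := fun x y t ht => by
  simpa using hF.homog x y t ht

lemma isFiberHomogeneous_sq (hF : IsFinsler F) : IsFiberHomogeneous 2 (fun p => F p ^ 2) :=
  fun x y t ht => by simp [hF.homog x y t ht, mul_pow]

lemma nonneg (hF : IsFinsler F) (p : E n × E n) : 0 ≤ F p := by
  obtain ⟨x, y⟩ := p
  by_cases hy : y = 0
  · rw [hy, hF.isFiberHomogeneous.map_zero one_ne_zero]
  · exact (hF.pos x y hy).le

lemma isBaseIndependent_sq_iff (hF : IsFinsler F) :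
    IsBaseIndependent (fun p => F p ^ 2) ↔ IsBaseIndependent F :=
  forall₃_congr fun _ _ _ => pow_left_inj₀ (hF.nonneg _) (hF.nonneg _) two_ne_zero

lemma isBaseIndependent_iff_satisfiesScaledHamel_sq (hF : IsFinsler F) :
    IsBaseIndependent F ↔ SatisfiesScaledHamel (1 / 2) (fun p => F p ^ 2) :=
  hF.isBaseIndependent_sq_iff.symm.trans <|
    statement13_general hF.isFiberHomogeneous_sq (fun _ => hF.contDiffAt_sq)
      (by norm_num) (by norm_num) (by norm_num)

end IsFinsler

/-- a Finsler function `F` on `ℝⁿ` is independent of its first argument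
(Minkowski space) iff `∑_k ∂²(F²)/∂x^k∂y^i · y^k = ½ ∑_k ∂²(F²)/∂x^i∂y^k · y^k`. -/
theorem statement13 {n : ℕ} (F : E n × E n → ℝ) (hF : IsFinsler F) :
    (∀ x x' y : E n, F (x, y) = F (x', y)) ↔
    (∀ (x y : E n), y ≠ 0 → ∀ i : Fin n,
      ∑ k, pdx k (pdy i (fun p => F p ^ 2)) (x, y) * y k =
        (1 / 2) * ∑ k, pdx i (pdy k (fun p => F p ^ 2)) (x, y) * y k) := by
  exact hF.isBaseIndependent_iff_satisfiesScaledHamel_sq.trans <|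
    satisfiesScaledHamel_iff_sum_pdx_pdy
      (fun _ hp => differentiableAt_fderiv_of_contDiffAt_two (hF.contDiffAt_sq hp)) (1 / 2)
end
end

section
/- Let g be a smooth Riemannian metric on ℝⁿ and set Q(x,y) = ∑_{k,j} g_{kj}(x)·y^k·y^j. Then g is constant — g_{ij}(x) = g_{ij}(x') for all x, x' and all i, j, i.e. (ℝⁿ, g) is a Euclidean space in the given coordinates — if and only if for every x ∈ ℝⁿ, every y ∈ ℝⁿ and every index i: ∑_s ∂²Q/∂x^s∂y^i(x,y)·y^s = ½·∑_s ∂²Q/∂x^i∂y^s(x,y)·y^s. -/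
open scoped BigOperators Topology
noncomputable section

/-!
With `D k i j = ∂g_{ij}/∂x^k`, one has `∂²Q/∂x^s∂y^i = 2 ∑ j, D s i j * y^j`, so the difference of
the two sides of the equation is `2 ∑ j, ∑ k, Γ_{i,jk} y^j y^k`, where `Γ` is the Christoffel symbol
of the first kind. As `Γ_{i,jk}` is symmetric in `j, k`, the equation says that `Γ = 0`, and this
means `D = 0` because `∂g_{ij}/∂x^k = Γ_{i,kj} + Γ_{j,ki}`.
-/

section Algebra

variable {ι K : Type*} [Field K]

theorem forall_dotProduct_mulVec_self_eq_zero_iff [Fintype ι] [NeZero (2 : K)]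
    {A : Matrix ι ι K} (hA : A.IsSymm) : (∀ y, y ⬝ᵥ A.mulVec y = 0) ↔ A = 0 := by
  classical
  have : Invertible (2 : K) := invertibleOfNonzero two_ne_zero
  have hB : A.toBilin'.IsSymm := Matrix.isSymm_toBilin'_iff_isSymm.mpr hA
  rw [← Matrix.toBilin'.map_eq_zero_iff,
    LinearMap.BilinForm.ext_iff_of_isSymm hB LinearMap.BilinForm.isSymm_zero]
  simp only [Matrix.toBilin'_apply', LinearMap.BilinForm.zero_apply]

/-- The Christoffel symbols of the first kind `Γ_{i,jk}`, as a matrix in `j` and `k` for each `i`,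
computed from the array `D k i j` of the partial derivatives `∂g_{ij}/∂x^k`. -/
def christoffelFirstKind (D : ι → ι → ι → K) (i : ι) : Matrix ι ι K :=
  Matrix.of fun j k => (D j i k + D k i j - D i j k) / 2

theorem two_mul_dotProduct_christoffelFirstKind_mulVec_self [Fintype ι] [NeZero (2 : K)]
    (D : ι → ι → ι → K) (i : ι) (y : ι → K) :
    2 * (y ⬝ᵥ (christoffelFirstKind D i).mulVec y) =
      2 * ∑ j, ∑ k, D j i k * y k * y j - ∑ j, ∑ k, D i j k * y k * y j := by
  have hswap : ∑ j, ∑ k, D k i j * y k * y j = ∑ j, ∑ k, D j i k * y k * y j := by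
    rw [Finset.sum_comm]
    simp only [mul_right_comm]
  calc 2 * (y ⬝ᵥ (christoffelFirstKind D i).mulVec y)
      = ∑ j, ∑ k, (D j i k * y k * y j + D k i j * y k * y j - D i j k * y k * y j) := by
        simp only [dotProduct, Matrix.mulVec, christoffelFirstKind, Matrix.of_apply,
          Finset.mul_sum]
        refine Finset.sum_congr rfl fun j _ => Finset.sum_congr rfl fun k _ => ?_
        field_simp
    _ = 2 * ∑ j, ∑ k, D j i k * y k * y j - ∑ j, ∑ k, D i j k * y k * y j := by
        simp only [Finset.sum_sub_distrib, Finset.sum_add_distrib, hswap, two_mul]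

variable {D : ι → ι → ι → K} (hD : ∀ k i j, D k i j = D k j i)
include hD

theorem christoffelFirstKind_isSymm (i : ι) : (christoffelFirstKind D i).IsSymm := by
  ext j k
  simp only [christoffelFirstKind, Matrix.transpose_apply, Matrix.of_apply, hD i k j,
    add_comm (D k i j)]

theorem christoffelFirstKind_add_christoffelFirstKind [NeZero (2 : K)] (i j k : ι) :
    christoffelFirstKind D i k j + christoffelFirstKind D j k i = D k i j := by
  simp only [christoffelFirstKind, Matrix.of_apply, hD i k j, hD j k i, hD k j i]
  field_simp
  ring

theorem christoffelFirstKind_eq_zero_iff [NeZero (2 : K)] :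
    (∀ i, christoffelFirstKind D i = 0) ↔ ∀ k i j, D k i j = 0 := by
  refine ⟨fun h k i j => ?_, fun h i => ?_⟩
  · simp only [← christoffelFirstKind_add_christoffelFirstKind hD i j k, h, Matrix.zero_apply,
      add_zero]
  · ext j k
    simp only [christoffelFirstKind, h, Matrix.of_apply, Matrix.zero_apply, add_zero, sub_zero,
      zero_div]

end Algebra

theorem forall_eq_iff_forall_fderiv_single_eq_zero {ι F : Type*} [Finite ι] [DecidableEq ι]
    [NormedAddCommGroup F] [NormedSpace ℝ F] {f : (ι → ℝ) → F} (hf : Differentiable ℝ f) :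
    (∀ x x', f x = f x') ↔ ∀ x k, fderiv ℝ f x (Pi.single k 1) = 0 := by
  have := Fintype.ofFinite ι
  refine ⟨fun h x k => ?_, fun h => is_const_of_fderiv_eq_zero hf fun x => ?_⟩
  · have hconst : f = fun _ => f x := funext fun z => h z x
    rw [hconst, fderiv_fun_const, Pi.zero_apply, zero_apply]
  · refine ContinuousLinearMap.coe_injective ((Pi.basisFun ℝ ι).ext fun k => ?_)
    simpa using h x k

theorem hasFDerivAt_comp_fst {𝕜 V W F : Type*} [NontriviallyNormedField 𝕜]
    [NormedAddCommGroup V] [NormedSpace 𝕜 V] [NormedAddCommGroup W] [NormedSpace 𝕜 W]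
    [NormedAddCommGroup F] [NormedSpace 𝕜 F] {f : V → F} {p : V × W}
    (hf : DifferentiableAt 𝕜 f p.1) :
    HasFDerivAt (fun q : V × W => f q.1)
      ((fderiv 𝕜 f p.1).comp (ContinuousLinearMap.fst 𝕜 V W)) p :=
  hf.hasFDerivAt.comp p hasFDerivAt_fst

section Metric

variable {n : ℕ}

theorem hasFDerivAt_snd_apply (p : E n × E n) (k : Fin n) :
    HasFDerivAt (fun q : E n × E n => q.2 k)
      ((ContinuousLinearMap.proj k).comp (ContinuousLinearMap.snd ℝ (E n) (E n))) p :=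
  HasFDerivAt.comp (g := fun y : E n => y k) p (hasFDerivAt_apply k p.2) hasFDerivAt_snd

theorem pdx_sum_mul_snd_apply {a : Fin n → E n → ℝ} {p : E n × E n}
    (ha : ∀ j, DifferentiableAt ℝ (a j) p.1) (s : Fin n) :
    pdx s (fun q => ∑ j, a j q.1 * q.2 j) p =
      ∑ j, fderiv ℝ (a j) p.1 (Pi.single s 1) * p.2 j := by
  have hsum := HasFDerivAt.fun_sum (u := Finset.univ) fun j _ =>
    (hasFDerivAt_comp_fst (ha j)).fun_mul (hasFDerivAt_snd_apply p j)
  rw [pdx, HasFDerivAt.fderiv hsum]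
  simp [mul_comm]

/-- The function `Q(x, y) = ∑ g_{kj}(x) y^k y^j` on the tangent bundle. -/
def metricQuadratic (g : E n → Matrix (Fin n) (Fin n) ℝ) (p : E n × E n) : ℝ :=
  ∑ k, ∑ j, g p.1 k j * p.2 k * p.2 j

/-- The partial derivative `∂g_{ij}/∂x^k` at `x`. -/
def metricDeriv (g : E n → Matrix (Fin n) (Fin n) ℝ) (x : E n) (k i j : Fin n) : ℝ :=
  fderiv ℝ (fun z => g z i j) x (Pi.single k 1)

variable {g : E n → Matrix (Fin n) (Fin n) ℝ}

theorem metricDeriv_symm (hsymm : ∀ x, (g x).IsSymm) (x : E n) (k i j : Fin n) :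
    metricDeriv g x k i j = metricDeriv g x k j i := by
  simp only [metricDeriv, fun z => (hsymm z).apply i j]

variable (hg : ∀ i j, Differentiable ℝ fun x => g x i j)
include hg

theorem forall_eq_iff_metricDeriv_eq_zero :
    (∀ x x', g x = g x') ↔ ∀ x k i j, metricDeriv g x k i j = 0 := by
  have hentry i j := forall_eq_iff_forall_fderiv_single_eq_zero (hg i j)
  refine ⟨fun h x k i j => (hentry i j).mp (fun z z' => by rw [h z z']) x k, fun h x x' => ?_⟩
  ext i j
  exact (hentry i j).mpr (fun z k => h z k i j) x x'

theorem pdy_metricQuadratic (i : Fin n) :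
    pdy i (metricQuadratic g) = fun p => ∑ j, (g p.1 i j + g p.1 j i) * p.2 j := by
  funext p
  have hsum := HasFDerivAt.fun_sum (u := Finset.univ) fun k _ =>
    HasFDerivAt.fun_sum (u := Finset.univ) fun j _ =>
      ((hasFDerivAt_comp_fst (hg k j p.1)).fun_mul
        (hasFDerivAt_snd_apply p k)).fun_mul (hasFDerivAt_snd_apply p j)
  rw [pdy, HasFDerivAt.fderiv (f := metricQuadratic g) hsum]
  simp [Pi.single_apply, Finset.sum_add_distrib, add_mul, mul_comm, add_comm]

variable (hsymm : ∀ x, (g x).IsSymm)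
include hsymm

theorem pdx_pdy_metricQuadratic (s i : Fin n) (x y : E n) :
    pdx s (pdy i (metricQuadratic g)) (x, y) = 2 * ∑ j, metricDeriv g x s i j * y j := by
  rw [pdy_metricQuadratic hg,
    pdx_sum_mul_snd_apply (a := fun j z => g z i j + g z j i)
      fun j => (hg i j x).add (hg j i x), Finset.mul_sum]
  refine Finset.sum_congr rfl fun j _ => ?_
  rw [fderiv_fun_add (hg i j x) (hg j i x), add_apply]
  change (metricDeriv g x s i j + metricDeriv g x s j i) * y j = _
  rw [metricDeriv_symm hsymm x s j i]
  ring

theorem sum_pdx_pdy_sub_half_sum_pdx_pdy (x y : E n) (i : Fin n) :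
    ∑ s, pdx s (pdy i (metricQuadratic g)) (x, y) * y s -
        (1 / 2) * ∑ s, pdx i (pdy s (metricQuadratic g)) (x, y) * y s =
      2 * (y ⬝ᵥ (christoffelFirstKind (metricDeriv g x) i).mulVec y) := by
  rw [two_mul_dotProduct_christoffelFirstKind_mulVec_self]
  simp only [pdx_pdy_metricQuadratic hg hsymm, mul_assoc, ← Finset.mul_sum, Finset.sum_mul]
  ring

end Metric

theorem statement14_general {n : ℕ} {g : E n → Matrix (Fin n) (Fin n) ℝ}
    (hg : ∀ i j, Differentiable ℝ fun x => g x i j) (hsymm : ∀ x, (g x).IsSymm) :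
    (∀ x x', g x = g x') ↔
      ∀ (x y : E n) (i : Fin n),
        ∑ s, pdx s (pdy i (metricQuadratic g)) (x, y) * y s =
          (1 / 2) * ∑ s, pdx i (pdy s (metricQuadratic g)) (x, y) * y s := by
  have hΓsymm x i := christoffelFirstKind_isSymm (metricDeriv_symm hsymm x) i
  calc (∀ x x', g x = g x')
      ↔ ∀ x k i j, metricDeriv g x k i j = 0 := forall_eq_iff_metricDeriv_eq_zero hg
    _ ↔ ∀ x i, christoffelFirstKind (metricDeriv g x) i = 0 :=
      forall_congr' fun x => (christoffelFirstKind_eq_zero_iff (metricDeriv_symm hsymm x)).symm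
    _ ↔ ∀ x i y, y ⬝ᵥ (christoffelFirstKind (metricDeriv g x) i).mulVec y = 0 :=
      forall₂_congr fun x i => (forall_dotProduct_mulVec_self_eq_zero_iff (hΓsymm x i)).symm
    _ ↔ ∀ x y i, y ⬝ᵥ (christoffelFirstKind (metricDeriv g x) i).mulVec y = 0 :=
      forall_congr' fun x => forall_comm
    _ ↔ _ := forall₃_congr fun x y i => by
      rw [← sub_eq_zero (b := 1 / 2 * _),
        sum_pdx_pdy_sub_half_sum_pdx_pdy hg hsymm,
        mul_eq_zero_iff_left two_ne_zero]

/-- a smooth Riemannian metric `g` on `ℝⁿ` is constant (Euclidean in the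
given coordinates) iff `Q(x,y) = ∑ g_{kj}(x) y^k y^j` satisfies
`∑_s ∂²Q/∂x^s∂y^i · y^s = ½ ∑_s ∂²Q/∂x^i∂y^s · y^s`. -/
theorem statement14 {n : ℕ} (g : E n → Matrix (Fin n) (Fin n) ℝ)
    (hgsmooth : ∀ i j : Fin n, ContDiff ℝ (⊤ : ℕ∞) (fun x => g x i j))
    (hgpos : ∀ x : E n, (g x).PosDef)
    (Q : E n × E n → ℝ)
    (hQ : Q = fun p => ∑ k, ∑ j, g p.1 k j * p.2 k * p.2 j) :
    (∀ x x' : E n, g x = g x') ↔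
    (∀ (x y : E n), ∀ i : Fin n,
      ∑ s, pdx s (pdy i Q) (x, y) * y s =
        (1 / 2) * ∑ s, pdx i (pdy s Q) (x, y) * y s) := by
  subst hQ
  exact statement14_general (fun i j => (hgsmooth i j).differentiable (by simp))
    fun x => Matrix.isHermitian_iff_isSymm.mp (hgpos x).isHermitian
end
end

section
/- Let N : ℝⁿ × ℝⁿ → ℝ be a weak Finsler function: N is continuous, and for each p the function N(p,·) is nonnegative, vanishes only at 0, absolutely homogeneous (N(p, λv) = |λ|·N(p,v) for all λ ∈ ℝ) and convex; moreover assume condition (C): for every a ∈ ℝⁿ ∖ {0} and b ∈ ℝⁿ, the limit N_g(v) := lim_{t→∞} N(t·a + b, v) exists for every v ∈ ℝⁿ, and N_g is continuous, nonnegative, vanishes only at 0, absolutely homogeneous and convex. Suppose (ℝⁿ, N) is projectively flat in a parameter-preserving manner in the following sense: for every affine line ℓ ⊆ ℝⁿ there exist a, b ∈ ℝⁿ with a ≠ 0 such that ℓ = { t·a + b : t ∈ ℝ } and N(t·a + b, a) = 1 for all t ∈ ℝ (every straight line carries a parametrization that is a geodesic of constant speed 1). Then N is independent of its first argument, i.e.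 N(p, v) = N(q, v) for all p, q, v ∈ ℝⁿ, so (ℝⁿ, N) is a Minkowski space. -/
open scoped BigOperators Topology
noncomputable section

/-!
If every line carries a unit-speed parametrization, homogeneity makes `N · v` constant on each line
of direction `v`. For `ε ≠ 0` the parallel lines `t • v + p` and `t • v + q` are joined, from time
`t` on the first to time `t + ε⁻¹` on the second, by a segment of direction `v + ε • (q - p)`, so
the limits of `N` along them agree in that direction. Letting `ε → 0`, continuity of the limits
gives agreement in the direction `v` itself, where `N` is constant on both lines.
-/

open Filter

section Lines

variable {V Y : Type*} [AddCommGroup V] [Module ℝ V]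

/-- `F · a` is constant on every line of direction `a`: for a Finsler function, every affine
parametrization of a line has constant speed. -/
def ConstantAlongLines (F : V → V → Y) : Prop :=
  ∀ (a b : V) (t : ℝ), F (t • a + b) a = F b a

/-- Projective flatness in a parameter-preserving manner: every line has an affine parametrization
of unit speed with respect to `N`. Lines are given by a nonzero direction and a point. -/
def HasUnitSpeedLines (N : V → V → ℝ) : Prop :=
  ∀ a : V, a ≠ 0 → ∀ b : V, ∃ a' b' : V,
    {p : V | ∃ t : ℝ, p = t • a + b} = {p : V | ∃ t : ℝ, p = t • a' + b'} ∧
    ∀ t : ℝ, N (t • a' + b') a' = 1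

/-- `G` is the limit function `N_g` of condition (C) along the line `g t = t • a + b`. -/
def HasLimitAlongLine [TopologicalSpace Y] (F : V → V → Y) (a b : V) (G : V → Y) : Prop :=
  ∀ v : V, Tendsto (fun t : ℝ => F (t • a + b) v) atTop (𝓝 (G v))

end Lines

theorem exists_eq_smul_of_line_subset {R V : Type*} [Ring R] [AddCommGroup V] [Module R V]
    {a b a' b' : V}
    (h : {p : V | ∃ t : R, p = t • a + b} ⊆ {p : V | ∃ t : R, p = t • a' + b'}) :
    ∃ c : R, a = c • a' := by
  obtain ⟨s₀, hs₀⟩ := h ⟨0, rfl⟩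
  obtain ⟨s₁, hs₁⟩ := h ⟨1, rfl⟩
  refine ⟨s₁ - s₀, ?_⟩
  calc a = ((1 : R) • a + b) - ((0 : R) • a + b) := by simp
    _ = (s₁ - s₀) • a' := by rw [hs₁, hs₀, add_sub_add_right_eq_sub, sub_smul]

theorem HasUnitSpeedLines.constantAlongLines {V : Type*} [AddCommGroup V] [Module ℝ V]
    {N : V → V → ℝ} (hflat : HasUnitSpeedLines N)
    (hhomog : ∀ (p : V) (c : ℝ) (v : V), N p (c • v) = |c| * N p v) :
    ConstantAlongLines N := by
  intro a b t
  obtain rfl | ha := eq_or_ne a 0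
  · rw [smul_zero, zero_add]
  obtain ⟨a', b', hline, hunit⟩ := hflat a ha b
  obtain ⟨c, rfl⟩ := exists_eq_smul_of_line_subset hline.subset
  have speed (p : V) (hp : p ∈ {p : V | ∃ s : ℝ, p = s • c • a' + b}) : N p (c • a') = |c| := by
    rw [hline] at hp
    obtain ⟨s, rfl⟩ := hp
    rw [hhomog, hunit, mul_one]
  rw [speed _ ⟨t, rfl⟩, speed b ⟨0, by rw [zero_smul, zero_add]⟩]

namespace ConstantAlongLines

variable {V Y : Type*} [AddCommGroup V] [Module ℝ V] [TopologicalSpace Y] [T2Space Y]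
  {F : V → V → Y} {p q v : V} {G H : V → Y}

theorem limit_apply_direction (hF : ConstantAlongLines F) (hG : HasLimitAlongLine F v p G) :
    G v = F p v :=
  tendsto_nhds_unique (hG v) (tendsto_const_nhds.congr fun t => (hF v p t).symm)

theorem limit_apply_add_smul_sub (hF : ConstantAlongLines F) (hG : HasLimitAlongLine F v p G)
    (hH : HasLimitAlongLine F v q H) {ε : ℝ} (hε : ε ≠ 0) :
    G (v + ε • (q - p)) = H (v + ε • (q - p)) := by
  have joined (t : ℝ) :
      (t + ε⁻¹) • v + q = ε⁻¹ • (v + ε • (q - p)) + (t • v + p) := by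
    rw [smul_add, inv_smul_smul₀ hε]
    module
  have shifted : Tendsto (fun t : ℝ => F ((t + ε⁻¹) • v + q) (v + ε • (q - p))) atTop
      (𝓝 (H (v + ε • (q - p)))) :=
    (hH _).comp (tendsto_atTop_add_const_right atTop ε⁻¹ tendsto_id)
  refine tendsto_nhds_unique (hG _) (shifted.congr fun t => ?_)
  rw [joined, hF]

theorem apply_eq_apply_of_limits [TopologicalSpace V] [ContinuousAdd V] [ContinuousSMul ℝ V]
    (hF : ConstantAlongLines F) (hG : HasLimitAlongLine F v p G) (hH : HasLimitAlongLine F v q H)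
    (hGc : ContinuousAt G v) (hHc : ContinuousAt H v) :
    F p v = F q v := by
  have direction_tendsto : Tendsto (fun ε : ℝ => v + ε • (q - p)) (𝓝[≠] 0) (𝓝 v) := by
    have hcont : Continuous fun ε : ℝ => v + ε • (q - p) := by fun_prop
    exact (hcont.tendsto' 0 v (by rw [zero_smul, add_zero])).mono_left nhdsWithin_le_nhds
  have limits_eventuallyEq :
      (fun ε : ℝ => H (v + ε • (q - p))) =ᶠ[𝓝[≠] 0] fun ε => G (v + ε • (q - p)) :=
    eventually_mem_nhdsWithin.mono fun _ hε => (hF.limit_apply_add_smul_sub hG hH hε).symm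
  calc F p v = G v := (hF.limit_apply_direction hG).symm
    _ = H v := tendsto_nhds_unique (hGc.tendsto.comp direction_tendsto)
        ((hHc.tendsto.comp direction_tendsto).congr' limits_eventuallyEq)
    _ = F q v := hF.limit_apply_direction hH

end ConstantAlongLines

theorem statement16_general {V : Type*} [AddCommGroup V] [Module ℝ V] [TopologicalSpace V]
    [ContinuousAdd V] [ContinuousSMul ℝ V] (N : V → V → ℝ)
    (hhomog : ∀ (p : V) (c : ℝ) (v : V), N p (c • v) = |c| * N p v)
    (hlim : ∀ a : V, a ≠ 0 → ∀ b : V, ∃ Ng : V → ℝ,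
      HasLimitAlongLine N a b Ng ∧ ContinuousAt Ng a)
    (hflat : HasUnitSpeedLines N) (p q v : V) :
    N p v = N q v := by
  obtain rfl | hv := eq_or_ne v 0
  · have apply_zero (r : V) : N r 0 = 0 := by simpa using hhomog r 0 0
    rw [apply_zero, apply_zero]
  obtain ⟨G, hG, hGc⟩ := hlim v hv p
  obtain ⟨H, hH, hHc⟩ := hlim v hv q
  exact (hflat.constantAlongLines hhomog).apply_eq_apply_of_limits hG hH hGc hHc

/-- a weak Finsler function on `ℝⁿ` (continuous, with norm-like fibres,
satisfying condition (C)) which is projectively flat in a parameter-preserving manner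
(every affine line carries a parametrization which is a geodesic of constant speed `1`)
is independent of its first argument, i.e. `(ℝⁿ, N)` is a Minkowski space. -/
theorem statement16 {n : ℕ} (N : E n → E n → ℝ)
    (hcont : Continuous fun p : E n × E n => N p.1 p.2)
    (hnonneg : ∀ (p v : E n), 0 ≤ N p v)
    (hdef : ∀ (p v : E n), N p v = 0 → v = 0)
    (hhomog : ∀ (p : E n) (c : ℝ) (v : E n), N p (c • v) = |c| * N p v)
    (hconvex : ∀ p : E n, ConvexOn ℝ Set.univ (N p))
    (hC : ∀ (a : E n), a ≠ 0 → ∀ b : E n, ∃ Ng : E n → ℝ,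
      (∀ v : E n, Filter.Tendsto (fun t : ℝ => N (t • a + b) v) Filter.atTop (nhds (Ng v))) ∧
      Continuous Ng ∧ (∀ v : E n, 0 ≤ Ng v) ∧ (∀ v : E n, Ng v = 0 → v = 0) ∧
      (∀ (c : ℝ) (v : E n), Ng (c • v) = |c| * Ng v) ∧ ConvexOn ℝ Set.univ Ng)
    (hflat : ∀ (a : E n), a ≠ 0 → ∀ b : E n, ∃ a' b' : E n,
      {p : E n | ∃ t : ℝ, p = t • a + b} = {p : E n | ∃ t : ℝ, p = t • a' + b'} ∧
      ∀ t : ℝ, N (t • a' + b') a' = 1) :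
    ∀ (p q v : E n), N p v = N q v := by
  exact statement16_general N hhomog (fun a ha b =>
    (hC a ha b).imp fun _ ⟨hlim, hNgc, _⟩ => ⟨hlim, hNgc.continuousAt⟩) hflat
end
end
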